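/- arXiv:2411.01413 — 4 statements merged into one kernel-verified Lean document; each statement's English description precedes it below -/
import Mathlib

section
/- Let R : g → g be a Rota-Baxter operator of weight zero on a BiHom-associative color algebra (g, μ, ε, α, β). Then the even bilinear map μ_R(x,y) = μ(R(x),y) + μ(x,R(y)) defines a BiHom-associative color algebra structure (g, μ_R, ε, α, β) on g. -/
/-- A skew-symmetric bicharacter (commutation factor) on an abelian group `Γ`
with values in `K \ {0}` (nonvanishing is a consequence of `skew`). -/
structure Bicharacter (K : Type*) (Γ : Type*) [Field K] [AddCommGroup Γ] where
  ε : Γ → Γ → K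
  skew : ∀ a b, ε a b * ε b a = 1
  add_right : ∀ a b c, ε a (b + c) = ε a b * ε a c
  add_left : ∀ a b c, ε (a + b) c = ε a c * ε b c

variable {K : Type*} [Field K] {Γ : Type*} [AddCommGroup Γ]
variable {g : Type*} [AddCommGroup g] [Module K g]
variable {V : Type*} [AddCommGroup V] [Module K V]

/-- A (multiplicative) BiHom-associative color algebra structure on a `Γ`-graded
vector space, all identities being required on homogeneous elements. -/
structure IsBiHomAssocColor (𝒜 : Γ → Submodule K g) (χ : Bicharacter K Γ)
    (μ : g →ₗ[K] g →ₗ[K] g) (α β : g →ₗ[K] g) : Prop where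
  mu_even : ∀ a b, ∀ x ∈ 𝒜 a, ∀ y ∈ 𝒜 b, μ x y ∈ 𝒜 (a + b)
  alpha_even : ∀ a, ∀ x ∈ 𝒜 a, α x ∈ 𝒜 a
  beta_even : ∀ a, ∀ x ∈ 𝒜 a, β x ∈ 𝒜 a
  comm : ∀ x, α (β x) = β (α x)
  mult_alpha : ∀ a b, ∀ x ∈ 𝒜 a, ∀ y ∈ 𝒜 b, μ (α x) (α y) = α (μ x y)
  mult_beta : ∀ a b, ∀ x ∈ 𝒜 a, ∀ y ∈ 𝒜 b, μ (β x) (β y) = β (μ x y)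
  assoc : ∀ a b c, ∀ x ∈ 𝒜 a, ∀ y ∈ 𝒜 b, ∀ z ∈ 𝒜 c,
    μ (α x) (μ y z) = μ (μ x y) (β z)

/-- A bimodule (representation) of a BiHom-associative color algebra. -/
structure IsAssocColorBimodule (𝒜 : Γ → Submodule K g) (𝒱 : Γ → Submodule K V)
    (χ : Bicharacter K Γ) (μ : g →ₗ[K] g →ₗ[K] g) (α β : g →ₗ[K] g)
    (l r : g →ₗ[K] V →ₗ[K] V) (αV βV : V →ₗ[K] V) : Prop where
  l_even : ∀ a b, ∀ x ∈ 𝒜 a, ∀ v ∈ 𝒱 b, l x v ∈ 𝒱 (a + b)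
  r_even : ∀ a b, ∀ x ∈ 𝒜 a, ∀ v ∈ 𝒱 b, r x v ∈ 𝒱 (a + b)
  alphaV_even : ∀ a, ∀ v ∈ 𝒱 a, αV v ∈ 𝒱 a
  betaV_even : ∀ a, ∀ v ∈ 𝒱 a, βV v ∈ 𝒱 a
  commV : ∀ v, αV (βV v) = βV (αV v)
  alphaV_l : ∀ a b, ∀ x ∈ 𝒜 a, ∀ v ∈ 𝒱 b, αV (l x v) = l (α x) (αV v)
  betaV_l : ∀ a b, ∀ x ∈ 𝒜 a, ∀ v ∈ 𝒱 b, βV (l x v) = l (β x) (βV v)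
  alphaV_r : ∀ a b, ∀ x ∈ 𝒜 a, ∀ v ∈ 𝒱 b, αV (r x v) = r (α x) (αV v)
  betaV_r : ∀ a b, ∀ x ∈ 𝒜 a, ∀ v ∈ 𝒱 b, βV (r x v) = r (β x) (βV v)
  l_mu : ∀ a b c, ∀ x ∈ 𝒜 a, ∀ y ∈ 𝒜 b, ∀ v ∈ 𝒱 c,
    l (α x) (l y v) = l (μ x y) (βV v)
  l_r : ∀ a b c, ∀ x ∈ 𝒜 a, ∀ y ∈ 𝒜 b, ∀ v ∈ 𝒱 c,
    l (α x) (r y v) = χ.ε a b • r (β y) (l x v)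
  r_mu : ∀ a b c, ∀ x ∈ 𝒜 a, ∀ y ∈ 𝒜 b, ∀ v ∈ 𝒱 c,
    r (μ x y) (αV v) = χ.ε a b • r (β y) (r x v)

/-- A 3-BiHom-Lie color algebra structure. -/
structure Is3BiHomLieColor (𝒜 : Γ → Submodule K g) (χ : Bicharacter K Γ)
    (m : g →ₗ[K] g →ₗ[K] g →ₗ[K] g) (α β : g →ₗ[K] g) : Prop where
  bracket_even : ∀ a b c, ∀ x ∈ 𝒜 a, ∀ y ∈ 𝒜 b, ∀ z ∈ 𝒜 c, m x y z ∈ 𝒜 (a + b + c)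
  alpha_even : ∀ a, ∀ x ∈ 𝒜 a, α x ∈ 𝒜 a
  beta_even : ∀ a, ∀ x ∈ 𝒜 a, β x ∈ 𝒜 a
  skew1 : ∀ a b c, ∀ x ∈ 𝒜 a, ∀ y ∈ 𝒜 b, ∀ z ∈ 𝒜 c,
    m (β x) (β y) (α z) = -(χ.ε a b • m (β y) (β x) (α z))
  skew2 : ∀ a b c, ∀ x ∈ 𝒜 a, ∀ y ∈ 𝒜 b, ∀ z ∈ 𝒜 c,
    m (β x) (β y) (α z) = -(χ.ε b c • m (β x) (β z) (α y))
  jacobi : ∀ a b c d e, ∀ x ∈ 𝒜 a, ∀ y ∈ 𝒜 b, ∀ z ∈ 𝒜 c, ∀ u ∈ 𝒜 d, ∀ v ∈ 𝒜 e,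
    m (β (β x)) (β (β y)) (m (β z) (β u) (α v))
      = χ.ε (a + b + c) (d + e) • m (β (β u)) (β (β v)) (m (β x) (β y) (α z))
        - (χ.ε (a + b) (c + e) * χ.ε d e) • m (β (β z)) (β (β v)) (m (β x) (β y) (α u))
        + χ.ε (a + b) (c + d) • m (β (β z)) (β (β u)) (m (β x) (β y) (α v))

/-- A multiplicative 3-BiHom-Lie color algebra structure. -/
structure IsMult3BiHomLieColor (𝒜 : Γ → Submodule K g) (χ : Bicharacter K Γ)
    (m : g →ₗ[K] g →ₗ[K] g →ₗ[K] g) (α β : g →ₗ[K] g)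
    extends Is3BiHomLieColor 𝒜 χ m α β : Prop where
  comm : ∀ x, α (β x) = β (α x)
  mult_alpha : ∀ a b c, ∀ x ∈ 𝒜 a, ∀ y ∈ 𝒜 b, ∀ z ∈ 𝒜 c,
    α (m x y z) = m (α x) (α y) (α z)
  mult_beta : ∀ a b c, ∀ x ∈ 𝒜 a, ∀ y ∈ 𝒜 b, ∀ z ∈ 𝒜 c,
    β (m x y z) = m (β x) (β y) (β z)

/-- A 3-Lie color algebra structure (`α = β = id` case), with the
ε-fundamental identity. -/
structure Is3LieColor (𝒜 : Γ → Submodule K g) (χ : Bicharacter K Γ)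
    (m : g →ₗ[K] g →ₗ[K] g →ₗ[K] g) : Prop where
  bracket_even : ∀ a b c, ∀ x ∈ 𝒜 a, ∀ y ∈ 𝒜 b, ∀ z ∈ 𝒜 c, m x y z ∈ 𝒜 (a + b + c)
  skew1 : ∀ a b c, ∀ x ∈ 𝒜 a, ∀ y ∈ 𝒜 b, ∀ z ∈ 𝒜 c,
    m x y z = -(χ.ε a b • m y x z)
  skew2 : ∀ a b c, ∀ x ∈ 𝒜 a, ∀ y ∈ 𝒜 b, ∀ z ∈ 𝒜 c,
    m x y z = -(χ.ε b c • m x z y)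
  fund : ∀ a b c d e, ∀ x ∈ 𝒜 a, ∀ y ∈ 𝒜 b, ∀ z ∈ 𝒜 c, ∀ t ∈ 𝒜 d, ∀ u ∈ 𝒜 e,
    m x y (m z t u)
      = m (m x y z) t u + χ.ε (a + b) c • m z (m x y t) u
        + χ.ε (a + b) (c + d) • m z t (m x y u)

/-- A representation of a 3-BiHom-Lie color algebra on a graded vector space `V`. -/
structure Is3BiHomLieRep (𝒜 : Γ → Submodule K g) (𝒱 : Γ → Submodule K V)
    (χ : Bicharacter K Γ) (m : g →ₗ[K] g →ₗ[K] g →ₗ[K] g) (α β : g →ₗ[K] g)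
    (ρ : g →ₗ[K] g →ₗ[K] V →ₗ[K] V) (αV βV : V →ₗ[K] V) : Prop where
  commV : ∀ v, αV (βV v) = βV (αV v)
  rho_even : ∀ a b c, ∀ x ∈ 𝒜 a, ∀ y ∈ 𝒜 b, ∀ v ∈ 𝒱 c, ρ x y v ∈ 𝒱 (a + b + c)
  alphaV_even : ∀ a, ∀ v ∈ 𝒱 a, αV v ∈ 𝒱 a
  betaV_even : ∀ a, ∀ v ∈ 𝒱 a, βV v ∈ 𝒱 a
  rho_skew : ∀ a b, ∀ x ∈ 𝒜 a, ∀ y ∈ 𝒜 b, ρ x y = -(χ.ε a b • ρ y x)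
  cond1 : ∀ a b, ∀ u ∈ 𝒜 a, ∀ v ∈ 𝒜 b,
    ρ (α u) (α v) ∘ₗ αV = αV ∘ₗ ρ u v
  cond2 : ∀ a b, ∀ u ∈ 𝒜 a, ∀ v ∈ 𝒜 b,
    ρ (β u) (β v) ∘ₗ βV = βV ∘ₗ ρ u v
  cond3 : ∀ a b c d, ∀ u ∈ 𝒜 a, ∀ v ∈ 𝒜 b, ∀ x ∈ 𝒜 c, ∀ y ∈ 𝒜 d,
    ρ (α (β u)) (α (β v)) ∘ₗ ρ x y
      = χ.ε (c + d) (a + b) • (ρ (β x) (β y) ∘ₗ ρ (α u) (α v))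
        + ρ (m (β u) (β v) x) (β y) ∘ₗ βV
        + χ.ε c (a + b) • (ρ (β x) (m (β u) (β v) y) ∘ₗ βV)
  cond4 : ∀ a b c d, ∀ u ∈ 𝒜 a, ∀ v ∈ 𝒜 b, ∀ x ∈ 𝒜 c, ∀ y ∈ 𝒜 d,
    ρ (m (β u) (β v) x) (β y) ∘ₗ βV
      = χ.ε a (c + b) • (ρ (α (β v)) (β x) ∘ₗ ρ (α u) y)
        + χ.ε c (a + b) • (ρ (β x) (α (β u)) ∘ₗ ρ (α v) y)
        + ρ (α (β u)) (α (β v)) ∘ₗ ρ x y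

/-- A noncommutative 3-BiHom-Poisson color algebra structure. -/
structure IsNC3BiHomPoissonColor (𝒜 : Γ → Submodule K g) (χ : Bicharacter K Γ)
    (m : g →ₗ[K] g →ₗ[K] g →ₗ[K] g) (μ : g →ₗ[K] g →ₗ[K] g)
    (α β : g →ₗ[K] g) : Prop where
  assoc : IsBiHomAssocColor 𝒜 χ μ α β
  lie : Is3BiHomLieColor 𝒜 χ m α β
  leibniz : ∀ a b c d, ∀ x ∈ 𝒜 a, ∀ y ∈ 𝒜 b, ∀ z ∈ 𝒜 c, ∀ t ∈ 𝒜 d,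
    m (α (β x)) (α (β y)) (μ z t)
      = μ (m (β x) (β y) z) (β t) + χ.ε (a + b) c • μ (β z) (m (α x) (α y) t)

/-- A representation of a noncommutative 3-BiHom-Poisson color algebra. -/
structure IsNC3BiHomPoissonRep (𝒜 : Γ → Submodule K g) (𝒱 : Γ → Submodule K V)
    (χ : Bicharacter K Γ) (m : g →ₗ[K] g →ₗ[K] g →ₗ[K] g) (μ : g →ₗ[K] g →ₗ[K] g)
    (α β : g →ₗ[K] g) (ρ : g →ₗ[K] g →ₗ[K] V →ₗ[K] V)
    (l r : g →ₗ[K] V →ₗ[K] V) (αV βV : V →ₗ[K] V) : Prop where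
  bimod : IsAssocColorBimodule 𝒜 𝒱 χ μ α β l r αV βV
  lierep : Is3BiHomLieRep 𝒜 𝒱 χ m α β ρ αV βV
  comp1 : ∀ a b c, ∀ x ∈ 𝒜 a, ∀ y ∈ 𝒜 b, ∀ z ∈ 𝒜 c,
    ρ (α (β x)) (α (β y)) ∘ₗ l z
      = l (m (β x) (β y) z) ∘ₗ βV + χ.ε (a + b) c • (l (β z) ∘ₗ ρ (α x) (α y))
  comp2 : ∀ a b c, ∀ x ∈ 𝒜 a, ∀ y ∈ 𝒜 b, ∀ z ∈ 𝒜 c,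
    ρ (α (β x)) (α (β y)) ∘ₗ r z
      = χ.ε (a + b) c • (r (β z) ∘ₗ ρ (β x) (β y)) + r (m (α x) (α y) z) ∘ₗ βV
  comp3 : ∀ a b c, ∀ x ∈ 𝒜 a, ∀ y ∈ 𝒜 b, ∀ z ∈ 𝒜 c,
    ρ (α (β x)) (μ (β y) (β z)) ∘ₗ (αV ∘ₗ αV ∘ₗ βV)
      = χ.ε (a + b) c • (r (α (β z)) ∘ₗ ρ x (β (β y)) ∘ₗ (αV ∘ₗ βV))
        + χ.ε a b • (l (α (β y)) ∘ₗ ρ (α x) (β z) ∘ₗ (αV ∘ₗ αV))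

/-- The 3-BiHom-ε-commutator of a ternary product, on homogeneous elements of
degrees `a`, `b`, `c`. -/
def preC (χ : Bicharacter K Γ) (m : g →ₗ[K] g →ₗ[K] g →ₗ[K] g)
    (α β : g ≃ₗ[K] g) (a b c : Γ) (x y z : g) : g :=
  m x y z - χ.ε b c • m x (β (α.symm z)) (α (β.symm y))
    + χ.ε a (b + c) • m y (β (α.symm z)) (α (β.symm x))

/-- A 3-BiHom-pre-Lie color algebra structure (with bijective structure maps). -/
structure Is3BiHomPreLieColor (𝒜 : Γ → Submodule K g) (χ : Bicharacter K Γ)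
    (m : g →ₗ[K] g →ₗ[K] g →ₗ[K] g) (α β : g ≃ₗ[K] g) : Prop where
  bracket_even : ∀ a b c, ∀ x ∈ 𝒜 a, ∀ y ∈ 𝒜 b, ∀ z ∈ 𝒜 c, m x y z ∈ 𝒜 (a + b + c)
  alpha_even : ∀ a, ∀ x ∈ 𝒜 a, α x ∈ 𝒜 a
  beta_even : ∀ a, ∀ x ∈ 𝒜 a, β x ∈ 𝒜 a
  comm : ∀ x, α (β x) = β (α x)
  mult_alpha : ∀ a b c, ∀ x ∈ 𝒜 a, ∀ y ∈ 𝒜 b, ∀ z ∈ 𝒜 c,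
    α (m x y z) = m (α x) (α y) (α z)
  mult_beta : ∀ a b c, ∀ x ∈ 𝒜 a, ∀ y ∈ 𝒜 b, ∀ z ∈ 𝒜 c,
    β (m x y z) = m (β x) (β y) (β z)
  skew : ∀ a b c, ∀ x ∈ 𝒜 a, ∀ y ∈ 𝒜 b, ∀ z ∈ 𝒜 c,
    m (β x) (β y) (α z) = -(χ.ε a b • m (β y) (β x) (α z))
  identity3 : ∀ a₁ a₂ a₃ a₄ a₅, ∀ x₁ ∈ 𝒜 a₁, ∀ x₂ ∈ 𝒜 a₂, ∀ x₃ ∈ 𝒜 a₃,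
      ∀ x₄ ∈ 𝒜 a₄, ∀ x₅ ∈ 𝒜 a₅,
    m (α (β x₄)) (α (β x₅)) (m x₁ x₂ x₃)
      = m (preC χ m α β a₄ a₅ a₁ (β x₄) (β x₅) x₁) (β x₂) (β x₃)
        + χ.ε a₁ (a₄ + a₅) • m (β x₁) (preC χ m α β a₄ a₅ a₂ (β x₄) (β x₅) x₂) (β x₃)
        + χ.ε (a₁ + a₂) (a₄ + a₅) • m (β x₁) (β x₂) (m (α x₄) (α x₅) x₃)
  identity4 : ∀ a₁ a₂ a₃ a₄ a₅, ∀ x₁ ∈ 𝒜 a₁, ∀ x₂ ∈ 𝒜 a₂, ∀ x₃ ∈ 𝒜 a₃,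
      ∀ x₄ ∈ 𝒜 a₄, ∀ x₅ ∈ 𝒜 a₅,
    m (preC χ m α β a₄ a₅ a₁ (β x₄) (β x₅) x₁) (β x₂) (β x₃)
      = χ.ε a₄ (a₁ + a₅) • m (α (β x₅)) (β x₁) (m (α x₄) x₂ x₃)
        + χ.ε a₁ (a₄ + a₅) • m (β x₁) (α (β x₄)) (m (α x₅) x₂ x₃)
        + m (α (β x₄)) (α (β x₅)) (m x₁ x₂ x₃)

/-- A BiHom-dendriform color algebra structure. -/
structure IsBiHomDendriformColor (𝒜 : Γ → Submodule K g) (χ : Bicharacter K Γ)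
    (pl pr : g →ₗ[K] g →ₗ[K] g) (α β : g →ₗ[K] g) : Prop where
  pl_even : ∀ a b, ∀ x ∈ 𝒜 a, ∀ y ∈ 𝒜 b, pl x y ∈ 𝒜 (a + b)
  pr_even : ∀ a b, ∀ x ∈ 𝒜 a, ∀ y ∈ 𝒜 b, pr x y ∈ 𝒜 (a + b)
  alpha_even : ∀ a, ∀ x ∈ 𝒜 a, α x ∈ 𝒜 a
  beta_even : ∀ a, ∀ x ∈ 𝒜 a, β x ∈ 𝒜 a
  comm : ∀ x, α (β x) = β (α x)
  alpha_pl : ∀ a b, ∀ x ∈ 𝒜 a, ∀ y ∈ 𝒜 b, α (pl x y) = pl (α x) (α y)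
  beta_pl : ∀ a b, ∀ x ∈ 𝒜 a, ∀ y ∈ 𝒜 b, β (pl x y) = pl (β x) (β y)
  alpha_pr : ∀ a b, ∀ x ∈ 𝒜 a, ∀ y ∈ 𝒜 b, α (pr x y) = pr (α x) (α y)
  beta_pr : ∀ a b, ∀ x ∈ 𝒜 a, ∀ y ∈ 𝒜 b, β (pr x y) = pr (β x) (β y)
  ax1 : ∀ a b c, ∀ x ∈ 𝒜 a, ∀ y ∈ 𝒜 b, ∀ z ∈ 𝒜 c,
    pl (pl x y) (β z) = pl (α x) (pl y z + pr y z)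
  ax2 : ∀ a b c, ∀ x ∈ 𝒜 a, ∀ y ∈ 𝒜 b, ∀ z ∈ 𝒜 c,
    pl (pr x y) (β z) = pr (α x) (pl y z)
  ax3 : ∀ a b c, ∀ x ∈ 𝒜 a, ∀ y ∈ 𝒜 b, ∀ z ∈ 𝒜 c,
    pr (α x) (pr y z) = pr (pl x y + pr x y) (β z)

/-- A noncommutative 3-BiHom-pre-Poisson color algebra structure. -/
structure IsNC3BiHomPrePoissonColor (𝒜 : Γ → Submodule K g) (χ : Bicharacter K Γ)
    (m : g →ₗ[K] g →ₗ[K] g →ₗ[K] g) (pl pr : g →ₗ[K] g →ₗ[K] g)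
    (α β : g ≃ₗ[K] g) : Prop where
  prelie : Is3BiHomPreLieColor 𝒜 χ m α β
  dend : IsBiHomDendriformColor 𝒜 χ pl pr α.toLinearMap β.toLinearMap
  comp1 : ∀ a b c d, ∀ x ∈ 𝒜 a, ∀ y ∈ 𝒜 b, ∀ z ∈ 𝒜 c, ∀ t ∈ 𝒜 d,
    m (α (β (β x))) (α (β (β y))) (pl z (α t))
        - pl (m (β (β x)) (β (β y)) z) (α (β t))
      = χ.ε c (a + b) •
          pl (β z)
            (m (α (β x)) (α (β y)) (α t) - χ.ε b d • m (α (β x)) (β t) (α (α y))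
              + χ.ε a (b + d) • m (α (β y)) (β t) (α (α x)))
  comp2 : ∀ a b c d, ∀ x ∈ 𝒜 a, ∀ y ∈ 𝒜 b, ∀ z ∈ 𝒜 c, ∀ t ∈ 𝒜 d,
    m (α (β x)) (α (α (β y))) (pr (α z) t)
        - χ.ε (a + b) c • pr (α (β z)) (m (α x) (α (α y)) t)
      = pr (m (β x) (α (β y)) (α z) - χ.ε b c • m (β x) (β z) (α (α y))
            + χ.ε a (b + c) • m (α (β y)) (β z) (α x)) (β t)
  comp3 : ∀ a b c d, ∀ x ∈ 𝒜 a, ∀ y ∈ 𝒜 b, ∀ z ∈ 𝒜 c, ∀ t ∈ 𝒜 d,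
    m (α (β x)) (β (pl y z)) (α (α (β t))) + m (α (β x)) (β (pr y z)) (α (α (β t)))
      = χ.ε a b • pr (α (β y)) (m (α x) (β z) (α (α t)))
        + χ.ε c d • pl (m (β x) (β y) (α (β t))) (α (β z))

/-! A Rota-Baxter operator `R` splits `μ_R` into two products, `x ≺ y = μ x (R y)` and
`x ≻ y = μ (R x) y`. The Rota-Baxter identity reads `μ (R x) (R y) = R (x ≺ y + x ≻ y)`, so
BiHom-associativity of `μ`, with `R` inserted at two of its three arguments, becomes the three
dendriform axioms. In any dendriform algebra these axioms add up to BiHom-associativity of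
`≺ + ≻`, which is `μ_R`. -/

/-- Rota-Baxter operators of weight zero on a color algebra with product `μ` and structure maps
`α` and `β`. As in `IsBiHomAssocColor`, the identity is required on homogeneous elements only. -/
structure IsRotaBaxterColor (𝒜 : Γ → Submodule K g) (μ : g →ₗ[K] g →ₗ[K] g)
    (α β R : g →ₗ[K] g) : Prop where
  even : ∀ a, ∀ x ∈ 𝒜 a, R x ∈ 𝒜 a
  comm_alpha : ∀ x, R (α x) = α (R x)
  comm_beta : ∀ x, R (β x) = β (R x)
  rotaBaxter : ∀ a b, ∀ x ∈ 𝒜 a, ∀ y ∈ 𝒜 b, μ (R x) (R y) = R (μ (R x) y + μ x (R y))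

section

variable {𝒜 : Γ → Submodule K g} {χ : Bicharacter K Γ} {α β : g →ₗ[K] g}

namespace IsBiHomDendriformColor

variable {pl pr : g →ₗ[K] g →ₗ[K] g}

theorem biHomAssoc_add (h : IsBiHomDendriformColor 𝒜 χ pl pr α β) {a b c : Γ} {x y z : g}
    (hx : x ∈ 𝒜 a) (hy : y ∈ 𝒜 b) (hz : z ∈ 𝒜 c) :
    (pl + pr) (α x) ((pl + pr) y z) = (pl + pr) ((pl + pr) x y) (β z) := by
  simp only [LinearMap.add_apply]
  calc
    pl (α x) (pl y z + pr y z) + pr (α x) (pl y z + pr y z)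
        = pl (α x) (pl y z + pr y z) + (pr (α x) (pl y z) + pr (α x) (pr y z)) := by
          rw [map_add (pr (α x))]
    _ = pl (pl x y) (β z) + (pl (pr x y) (β z) + pr (pl x y + pr x y) (β z)) := by
          rw [h.ax1 a b c x hx y hy z hz, h.ax2 a b c x hx y hy z hz, h.ax3 a b c x hx y hy z hz]
    _ = pl (pl x y + pr x y) (β z) + pr (pl x y + pr x y) (β z) := by
          rw [map_add pl, LinearMap.add_apply, add_assoc]

theorem isBiHomAssocColor_add (h : IsBiHomDendriformColor 𝒜 χ pl pr α β) :
    IsBiHomAssocColor 𝒜 χ (pl + pr) α β where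
  mu_even a b x hx y hy := add_mem (h.pl_even a b x hx y hy) (h.pr_even a b x hx y hy)
  alpha_even := h.alpha_even
  beta_even := h.beta_even
  comm := h.comm
  mult_alpha a b x hx y hy := by
    simp only [LinearMap.add_apply, map_add, h.alpha_pl a b x hx y hy, h.alpha_pr a b x hx y hy]
  mult_beta a b x hx y hy := by
    simp only [LinearMap.add_apply, map_add, h.beta_pl a b x hx y hy, h.beta_pr a b x hx y hy]
  assoc _ _ _ _ hx _ hy _ hz := h.biHomAssoc_add hx hy hz

end IsBiHomDendriformColor

namespace IsRotaBaxterColor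

variable {μ : g →ₗ[K] g →ₗ[K] g} {R : g →ₗ[K] g}

theorem isBiHomDendriformColor (hR : IsRotaBaxterColor 𝒜 μ α β R)
    (h : IsBiHomAssocColor 𝒜 χ μ α β) :
    IsBiHomDendriformColor 𝒜 χ (μ.compl₂ R) (μ ∘ₗ R) α β where
  pl_even a b x hx y hy := h.mu_even a b x hx (R y) (hR.even b y hy)
  pr_even a b x hx y hy := h.mu_even a b (R x) (hR.even a x hx) y hy
  alpha_even := h.alpha_even
  beta_even := h.beta_even
  comm := h.comm
  alpha_pl a b x hx y hy := by
    simp only [LinearMap.compl₂_apply, hR.comm_alpha,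
      h.mult_alpha a b x hx (R y) (hR.even b y hy)]
  beta_pl a b x hx y hy := by
    simp only [LinearMap.compl₂_apply, hR.comm_beta, h.mult_beta a b x hx (R y) (hR.even b y hy)]
  alpha_pr a b x hx y hy := by
    simp only [LinearMap.comp_apply, hR.comm_alpha, h.mult_alpha a b (R x) (hR.even a x hx) y hy]
  beta_pr a b x hx y hy := by
    simp only [LinearMap.comp_apply, hR.comm_beta, h.mult_beta a b (R x) (hR.even a x hx) y hy]
  ax1 a b c x hx y hy z hz := calc
    μ (μ x (R y)) (R (β z)) = μ (μ x (R y)) (β (R z)) := by rw [hR.comm_beta]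
    _ = μ (α x) (μ (R y) (R z)) :=
      (h.assoc a b c x hx (R y) (hR.even b y hy) (R z) (hR.even c z hz)).symm
    _ = μ (α x) (R (μ y (R z) + μ (R y) z)) := by rw [hR.rotaBaxter b c y hy z hz, add_comm]
  ax2 a b c x hx y hy z hz := calc
    μ (μ (R x) y) (R (β z)) = μ (μ (R x) y) (β (R z)) := by rw [hR.comm_beta]
    _ = μ (α (R x)) (μ y (R z)) :=
      (h.assoc a b c (R x) (hR.even a x hx) y hy (R z) (hR.even c z hz)).symm
    _ = μ (R (α x)) (μ y (R z)) := by rw [hR.comm_alpha]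
  ax3 a b c x hx y hy z hz := calc
    μ (R (α x)) (μ (R y) z) = μ (α (R x)) (μ (R y) z) := by rw [hR.comm_alpha]
    _ = μ (μ (R x) (R y)) (β z) :=
      h.assoc a b c (R x) (hR.even a x hx) (R y) (hR.even b y hy) z hz
    _ = μ (R (μ x (R y) + μ (R x) y)) (β z) := by rw [hR.rotaBaxter a b x hx y hy, add_comm]

end IsRotaBaxterColor

end

/-- a Rota-Baxter operator of weight zero on a BiHom-associative
color algebra induces a new BiHom-associative color algebra structure. -/
theorem rotaBaxter_induced_BiHom_assoc
    (𝒜 : Γ → Submodule K g) (χ : Bicharacter K Γ)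
    (μ : g →ₗ[K] g →ₗ[K] g) (α β : g →ₗ[K] g)
    (halg : IsBiHomAssocColor 𝒜 χ μ α β)
    (R : g →ₗ[K] g)
    (hRe : ∀ a, ∀ x ∈ 𝒜 a, R x ∈ 𝒜 a)
    (hRα : ∀ x, R (α x) = α (R x)) (hRβ : ∀ x, R (β x) = β (R x))
    (hRB : ∀ a b, ∀ x ∈ 𝒜 a, ∀ y ∈ 𝒜 b,
      μ (R x) (R y) = R (μ (R x) y + μ x (R y)))
    (μR : g →ₗ[K] g →ₗ[K] g)
    (hμR : ∀ x y, μR x y = μ (R x) y + μ x (R y)) :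
    IsBiHomAssocColor 𝒜 χ μR α β := by
  have hR : IsRotaBaxterColor 𝒜 μ α β R := ⟨hRe, hRα, hRβ, hRB⟩
  have μR_eq_add : μR = μ.compl₂ R + μ ∘ₗ R := by
    ext x y
    exact (hμR x y).trans (add_comm _ _)
  rw [μR_eq_add]
  exact (hR.isBiHomDendriformColor halg).isBiHomAssocColor_add
end

section
/- Let (g, [·,·,·], ε) be a 3-Lie color algebra and let α, β : g → g be two even commuting algebra morphisms (α([x,y,z]) = [α(x),α(y),α(z)], β([x,y,z]) = [β(x),β(y),β(z)], α∘β = β∘α). Then (g, [·,·,·]_{α,β}, ε, α, β) is a multiplicative 3-BiHom-Lie color algebra, where [x,y,z]_{α,β} = [α(x), α(y), β(z)] for all homogeneous x,y,z ∈ g. -/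
variable {K : Type*} [Field K] {Γ : Type*} [AddCommGroup Γ]
variable {g : Type*} [AddCommGroup g] [Module K g]
variable {V : Type*} [AddCommGroup V] [Module K V]

/-! Moving the inner bracket of each term of the `ε`-fundamental identity to the last slot turns it
into the `ε`-3-BiHom-Jacobi identity with `α = β = id`, so a 3-Lie color algebra is a multiplicative
3-BiHom-Lie color algebra with trivial structure maps. Twisting `m` to `m (φ x) (φ y) (ψ z)` and
`(α, β)` to `(α ∘ φ, β ∘ ψ)` preserves multiplicative 3-BiHom-Lie color algebras: by commutation,
each skew-symmetry axiom at `x, y, z` is the old one at `φ (ψ x), φ (ψ y), φ (ψ z)`, and the Jacobi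
identity is the old one at the arguments `φ (ψ (ψ x)), …`. -/

namespace Is3LieColor

variable {𝒜 : Γ → Submodule K g} {χ : Bicharacter K Γ} {m : g →ₗ[K] g →ₗ[K] g →ₗ[K] g}

theorem bracket_rotate (h : Is3LieColor 𝒜 χ m) {a b c : Γ} {x y z : g}
    (hx : x ∈ 𝒜 a) (hy : y ∈ 𝒜 b) (hz : z ∈ 𝒜 c) :
    m x y z = χ.ε a (b + c) • m y z x := by
  rw [h.skew1 a b c x hx y hy z hz, h.skew2 b a c y hy x hx z hz, smul_neg, neg_neg, smul_smul,
    χ.add_right]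

theorem jacobi (h : Is3LieColor 𝒜 χ m) {a b c d e : Γ} {x y z u v : g}
    (hx : x ∈ 𝒜 a) (hy : y ∈ 𝒜 b) (hz : z ∈ 𝒜 c) (hu : u ∈ 𝒜 d) (hv : v ∈ 𝒜 e) :
    m x y (m z u v)
      = χ.ε (a + b + c) (d + e) • m u v (m x y z)
        - (χ.ε (a + b) (c + e) * χ.ε d e) • m z v (m x y u)
        + χ.ε (a + b) (c + d) • m z u (m x y v) := by
  have hxyz : m x y z ∈ 𝒜 (a + b + c) := h.bracket_even a b c x hx y hy z hz
  have hxyu : m x y u ∈ 𝒜 (a + b + d) := h.bracket_even a b d x hx y hy u hu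
  have sign : χ.ε (a + b) c * χ.ε (a + b + d) e = χ.ε (a + b) (c + e) * χ.ε d e := by
    rw [χ.add_left (a + b) d e, χ.add_right (a + b) c e, mul_assoc]
  calc m x y (m z u v)
      = m (m x y z) u v + χ.ε (a + b) c • m z (m x y u) v
          + χ.ε (a + b) (c + d) • m z u (m x y v) :=
        h.fund a b c d e x hx y hy z hz u hu v hv
    _ = χ.ε (a + b + c) (d + e) • m u v (m x y z)
          - (χ.ε (a + b) c * χ.ε (a + b + d) e) • m z v (m x y u)
          + χ.ε (a + b) (c + d) • m z u (m x y v) := by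
        rw [h.bracket_rotate hxyz hu hv, h.skew2 _ _ _ z hz _ hxyu v hv, smul_neg, smul_smul,
          ← sub_eq_add_neg]
    _ = _ := by rw [sign]

theorem isMult3BiHomLieColor_id (h : Is3LieColor 𝒜 χ m) :
    IsMult3BiHomLieColor 𝒜 χ m LinearMap.id LinearMap.id where
  bracket_even := h.bracket_even
  alpha_even _ _ hx := hx
  beta_even _ _ hx := hx
  skew1 := h.skew1
  skew2 := h.skew2
  jacobi _ _ _ _ _ _ hx _ hy _ hz _ hu _ hv := h.jacobi hx hy hz hu hv
  comm _ := rfl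
  mult_alpha _ _ _ _ _ _ _ _ _ := rfl
  mult_beta _ _ _ _ _ _ _ _ _ := rfl

end Is3LieColor

/-- The Yau twist `[x, y, z]_{φ,ψ} = [φ x, φ y, ψ z]` of a ternary bracket. -/
def twistBracket (m : g →ₗ[K] g →ₗ[K] g →ₗ[K] g) (φ ψ : g →ₗ[K] g) :
    g →ₗ[K] g →ₗ[K] g →ₗ[K] g :=
  (m.compl₁₂ φ φ).compr₂ (LinearMap.lcomp K g ψ)

theorem twistBracket_apply (m : g →ₗ[K] g →ₗ[K] g →ₗ[K] g) (φ ψ : g →ₗ[K] g) (x y z : g) :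
    twistBracket m φ ψ x y z = m (φ x) (φ y) (ψ z) :=
  rfl

/-- An even algebra endomorphism of a graded space with a ternary bracket. As in
`IsMult3BiHomLieColor`, compatibility with the bracket is required on homogeneous elements only. -/
structure IsEvenMorphism {ι : Type*} (𝒜 : ι → Submodule K g) (m : g →ₗ[K] g →ₗ[K] g →ₗ[K] g)
    (φ : g →ₗ[K] g) : Prop where
  even : ∀ a, ∀ x ∈ 𝒜 a, φ x ∈ 𝒜 a
  map_bracket : ∀ a b c, ∀ x ∈ 𝒜 a, ∀ y ∈ 𝒜 b, ∀ z ∈ 𝒜 c,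
    φ (m x y z) = m (φ x) (φ y) (φ z)

section EvenMorphism

variable {ι : Type*} {𝒜 : ι → Submodule K g} {m : g →ₗ[K] g →ₗ[K] g →ₗ[K] g}
  {φ ψ θ : g →ₗ[K] g}

theorem IsEvenMorphism.comp (hθ : IsEvenMorphism 𝒜 m θ) (hφ : IsEvenMorphism 𝒜 m φ) :
    IsEvenMorphism 𝒜 m (θ ∘ₗ φ) where
  even a x hx := hθ.even a _ (hφ.even a x hx)
  map_bracket a b c x hx y hy z hz := by
    simp only [LinearMap.comp_apply]
    rw [hφ.map_bracket a b c x hx y hy z hz,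
      hθ.map_bracket a b c _ (hφ.even a x hx) _ (hφ.even b y hy) _ (hφ.even c z hz)]

theorem IsEvenMorphism.twistBracket (hθ : IsEvenMorphism 𝒜 m θ)
    (hφ : ∀ a, ∀ x ∈ 𝒜 a, φ x ∈ 𝒜 a) (hψ : ∀ a, ∀ x ∈ 𝒜 a, ψ x ∈ 𝒜 a)
    (hθφ : ∀ x, θ (φ x) = φ (θ x)) (hθψ : ∀ x, θ (ψ x) = ψ (θ x)) :
    IsEvenMorphism 𝒜 (twistBracket m φ ψ) θ where
  even := hθ.even
  map_bracket a b c x hx y hy z hz := by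
    simp only [twistBracket_apply, ← hθφ, ← hθψ]
    exact hθ.map_bracket a b c _ (hφ a x hx) _ (hφ b y hy) _ (hψ c z hz)

end EvenMorphism

section Twist

variable {𝒜 : Γ → Submodule K g} {χ : Bicharacter K Γ} {m : g →ₗ[K] g →ₗ[K] g →ₗ[K] g}
  {α β φ ψ : g →ₗ[K] g}

theorem IsMult3BiHomLieColor.isEvenMorphism_alpha (h : IsMult3BiHomLieColor 𝒜 χ m α β) :
    IsEvenMorphism 𝒜 m α :=
  ⟨h.alpha_even, h.mult_alpha⟩

theorem IsMult3BiHomLieColor.isEvenMorphism_beta (h : IsMult3BiHomLieColor 𝒜 χ m α β) :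
    IsEvenMorphism 𝒜 m β :=
  ⟨h.beta_even, h.mult_beta⟩

theorem Is3BiHomLieColor.twist (h : Is3BiHomLieColor 𝒜 χ m α β)
    (hφ : ∀ a, ∀ x ∈ 𝒜 a, φ x ∈ 𝒜 a) (hψ : IsEvenMorphism 𝒜 m ψ)
    (hφψ : ∀ x, φ (ψ x) = ψ (φ x)) (hαψ : ∀ x, α (ψ x) = ψ (α x))
    (hβφ : ∀ x, β (φ x) = φ (β x)) (hβψ : ∀ x, β (ψ x) = ψ (β x)) :
    Is3BiHomLieColor 𝒜 χ (twistBracket m φ ψ) (α ∘ₗ φ) (β ∘ₗ ψ) := by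
  have hφψ_mem : ∀ a, ∀ x ∈ 𝒜 a, φ (ψ x) ∈ 𝒜 a := fun a x hx => hφ a _ (hψ.even a x hx)
  have twist_apply : ∀ x y z,
      twistBracket m φ ψ ((β ∘ₗ ψ) x) ((β ∘ₗ ψ) y) ((α ∘ₗ φ) z)
        = m (β (φ (ψ x))) (β (φ (ψ y))) (α (φ (ψ z))) := by
    intro x y z
    simp only [twistBracket_apply, LinearMap.comp_apply, ← hβφ, ← hαψ, ← hφψ]
  have twist_twist_apply : ∀ a b c, ∀ x ∈ 𝒜 a, ∀ y ∈ 𝒜 b, ∀ z ∈ 𝒜 c, ∀ s t,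
      twistBracket m φ ψ ((β ∘ₗ ψ) ((β ∘ₗ ψ) s)) ((β ∘ₗ ψ) ((β ∘ₗ ψ) t))
          (twistBracket m φ ψ ((β ∘ₗ ψ) x) ((β ∘ₗ ψ) y) ((α ∘ₗ φ) z))
        = m (β (β (φ (ψ (ψ s))))) (β (β (φ (ψ (ψ t)))))
            (m (β (φ (ψ (ψ x)))) (β (φ (ψ (ψ y)))) (α (φ (ψ (ψ z))))) := by
    intro a b c x hx y hy z hz s t
    rw [twist_apply, twistBracket_apply,
      hψ.map_bracket a b c _ (h.beta_even a _ (hφψ_mem a x hx)) _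
        (h.beta_even b _ (hφψ_mem b y hy)) _ (h.alpha_even c _ (hφψ_mem c z hz))]
    simp only [LinearMap.comp_apply, ← hβφ, ← hβψ, ← hαψ, ← hφψ]
  have hφψψ_mem : ∀ a, ∀ x ∈ 𝒜 a, φ (ψ (ψ x)) ∈ 𝒜 a := fun a x hx =>
    hφψ_mem a _ (hψ.even a x hx)
  refine
    { bracket_even := fun a b c x hx y hy z hz =>
        h.bracket_even a b c _ (hφ a x hx) _ (hφ b y hy) _ (hψ.even c z hz)
      alpha_even := fun a x hx => h.alpha_even a _ (hφ a x hx)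
      beta_even := fun a x hx => h.beta_even a _ (hψ.even a x hx)
      skew1 := fun a b c x hx y hy z hz => ?_
      skew2 := fun a b c x hx y hy z hz => ?_
      jacobi := fun a b c d e x hx y hy z hz u hu v hv => ?_ }
  · simpa only [twist_apply] using
      h.skew1 a b c _ (hφψ_mem a x hx) _ (hφψ_mem b y hy) _ (hφψ_mem c z hz)
  · simpa only [twist_apply] using
      h.skew2 a b c _ (hφψ_mem a x hx) _ (hφψ_mem b y hy) _ (hφψ_mem c z hz)
  · rw [twist_twist_apply c d e z hz u hu v hv, twist_twist_apply a b c x hx y hy z hz,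
      twist_twist_apply a b d x hx y hy u hu, twist_twist_apply a b e x hx y hy v hv]
    exact h.jacobi a b c d e _ (hφψψ_mem a x hx) _ (hφψψ_mem b y hy) _ (hφψψ_mem c z hz)
      _ (hφψψ_mem d u hu) _ (hφψψ_mem e v hv)

theorem twist_3Lie_color_general (h : IsMult3BiHomLieColor 𝒜 χ m α β)
    (hφ : IsEvenMorphism 𝒜 m φ) (hψ : IsEvenMorphism 𝒜 m ψ)
    (hφψ : ∀ x, φ (ψ x) = ψ (φ x))
    (hαφ : ∀ x, α (φ x) = φ (α x)) (hαψ : ∀ x, α (ψ x) = ψ (α x))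
    (hβφ : ∀ x, β (φ x) = φ (β x)) (hβψ : ∀ x, β (ψ x) = ψ (β x)) :
    IsMult3BiHomLieColor 𝒜 χ (twistBracket m φ ψ) (α ∘ₗ φ) (β ∘ₗ ψ) where
  toIs3BiHomLieColor := h.toIs3BiHomLieColor.twist hφ.even hψ hφψ hαψ hβφ hβψ
  comm x := by simp only [LinearMap.comp_apply, ← hβφ, hφψ, hαψ, h.comm, hαφ, hβψ]
  mult_alpha := ((h.isEvenMorphism_alpha.comp hφ).twistBracket hφ.even hψ.even
    (fun x => hαφ (φ x))
    (fun x => by simp only [LinearMap.comp_apply, hφψ, hαψ])).map_bracket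
  mult_beta := ((h.isEvenMorphism_beta.comp hψ).twistBracket hφ.even hψ.even
    (fun x => by simp only [LinearMap.comp_apply, ← hφψ, hβφ])
    (fun x => hβψ (ψ x))).map_bracket

end Twist

/-- twisting a 3-Lie color algebra by two commuting even algebra
morphisms yields a multiplicative 3-BiHom-Lie color algebra. -/
theorem twist_3Lie_color
    (𝒜 : Γ → Submodule K g) (χ : Bicharacter K Γ)
    (m : g →ₗ[K] g →ₗ[K] g →ₗ[K] g)
    (h3 : Is3LieColor 𝒜 χ m)
    (α β : g →ₗ[K] g)
    (hαe : ∀ a, ∀ x ∈ 𝒜 a, α x ∈ 𝒜 a) (hβe : ∀ a, ∀ x ∈ 𝒜 a, β x ∈ 𝒜 a)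
    (hcomm : ∀ x, α (β x) = β (α x))
    (hαm : ∀ x y z, α (m x y z) = m (α x) (α y) (α z))
    (hβm : ∀ x y z, β (m x y z) = m (β x) (β y) (β z))
    (m' : g →ₗ[K] g →ₗ[K] g →ₗ[K] g)
    (hm' : ∀ x y z, m' x y z = m (α x) (α y) (β z)) :
    IsMult3BiHomLieColor 𝒜 χ m' α β := by
  obtain rfl : m' = twistBracket m α β := by ext x y z; exact hm' x y z
  exact twist_3Lie_color_general h3.isMult3BiHomLieColor_id
    ⟨hαe, fun _ _ _ x _ y _ z _ => hαm x y z⟩ ⟨hβe, fun _ _ _ x _ y _ z _ => hβm x y z⟩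
    hcomm (fun _ => rfl) (fun _ => rfl) (fun _ => rfl) (fun _ => rfl)
end

section
/- Let R : g → g be a Rota-Baxter operator of weight zero on a 3-BiHom-Lie color algebra (g, [·,·,·], ε, α, β). Then the even trilinear map [x,y,z]_R = [R(x),R(y),z] + [R(x),y,R(z)] + [x,R(y),R(z)] defines a 3-BiHom-Lie color algebra structure (g, [·,·,·]_R, ε, α, β) on g. -/
variable {K : Type*} [Field K] {Γ : Type*} [AddCommGroup Γ]
variable {g : Type*} [AddCommGroup g] [Module K g]
variable {V : Type*} [AddCommGroup V] [Module K V]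

/-!
Write `J` for the difference of the two sides of the ε-3-BiHom-Jacobi identity, a multilinear
expression in five arguments. The Rota-Baxter identity turns `R [x, y, z]_R` into `[R x, R y, R z]`,
so expanding the outer bracket of each term of `J` for `[·,·,·]_R` gives the sum of the five values
of `J` for `[·,·,·]` in which `R` is applied to all arguments but one. In the same way, each
skew-symmetry defect of `[·,·,·]_R` is the sum of three such defects of `[·,·,·]`.
-/

section RotaBaxterBracket

variable {S M : Type*} [CommSemiring S] [AddCommMonoid M] [Module S M]

/-- The bracket `[x, y, z]_R` induced from a ternary bracket `m` by a linear map `R`, written with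
compositions of linear maps so that it is trilinear by construction. -/
def rotaBaxterBracket (m : M →ₗ[S] M →ₗ[S] M →ₗ[S] M) (R : M →ₗ[S] M) :
    M →ₗ[S] M →ₗ[S] M →ₗ[S] M :=
  m.compl₁₂ R R + (m.comp R).compr₂ (R.lcomp S M) + (m.compl₂ R).compr₂ (R.lcomp S M)

theorem rotaBaxterBracket_apply (m : M →ₗ[S] M →ₗ[S] M →ₗ[S] M) (R : M →ₗ[S] M)
    (x y z : M) :
    rotaBaxterBracket m R x y z = m (R x) (R y) z + m (R x) y (R z) + m x (R y) (R z) :=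
  rfl

variable {m : M →ₗ[S] M →ₗ[S] M →ₗ[S] M} {R : M →ₗ[S] M}

theorem rotaBaxterBracket_mem {A B C : Set M} {D : Submodule S M}
    (hA : Set.MapsTo R A A) (hB : Set.MapsTo R B B) (hC : Set.MapsTo R C C)
    (hm : ∀ x ∈ A, ∀ y ∈ B, ∀ z ∈ C, m x y z ∈ D) {x y z : M}
    (hx : x ∈ A) (hy : y ∈ B) (hz : z ∈ C) : rotaBaxterBracket m R x y z ∈ D :=
  add_mem (add_mem (hm _ (hA hx) _ (hB hy) _ hz) (hm _ (hA hx) _ hy _ (hC hz)))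
    (hm _ hx _ (hB hy) _ (hC hz))

theorem rotaBaxterBracket_rotaBaxterBracket {α β : M → M}
    (hRα : Function.Commute R α) (hRβ : Function.Commute R β) {x y z u v : M}
    (hRB : m (R (β z)) (R (β u)) (R (α v)) = R (rotaBaxterBracket m R (β z) (β u) (α v))) :
    rotaBaxterBracket m R (β (β x)) (β (β y)) (rotaBaxterBracket m R (β z) (β u) (α v)) =
      m (β (β x)) (β (β (R y))) (m (β (R z)) (β (R u)) (α (R v)))
        + m (β (β (R x))) (β (β y)) (m (β (R z)) (β (R u)) (α (R v)))
        + m (β (β (R x))) (β (β (R y))) (m (β z) (β (R u)) (α (R v)))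
        + m (β (β (R x))) (β (β (R y))) (m (β (R z)) (β u) (α (R v)))
        + m (β (β (R x))) (β (β (R y))) (m (β (R z)) (β (R u)) (α v)) := by
  rw [rotaBaxterBracket_apply, ← hRB]
  simp only [rotaBaxterBracket_apply, hRα.eq, hRβ.eq, map_add]
  abel

end RotaBaxterBracket

section Defects

variable {S M : Type*} [CommRing S] [AddCommGroup M] [Module S M]
  {m : M →ₗ[S] M →ₗ[S] M →ₗ[S] M} {R : M →ₗ[S] M} {α β : M → M}

theorem rotaBaxterBracket_skew_left {A B C : Set M} {c : S}
    (hRα : Function.Commute R α) (hRβ : Function.Commute R β)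
    (hA : Set.MapsTo R A A) (hB : Set.MapsTo R B B) (hC : Set.MapsTo R C C)
    (hm : ∀ x ∈ A, ∀ y ∈ B, ∀ z ∈ C, m (β x) (β y) (α z) = -(c • m (β y) (β x) (α z)))
    {x y z : M} (hx : x ∈ A) (hy : y ∈ B) (hz : z ∈ C) :
    rotaBaxterBracket m R (β x) (β y) (α z) =
      -(c • rotaBaxterBracket m R (β y) (β x) (α z)) := by
  simp only [rotaBaxterBracket_apply, hRα.eq, hRβ.eq]
  linear_combination (norm := module)
    hm _ (hA hx) _ (hB hy) _ hz + hm _ (hA hx) _ hy _ (hC hz) + hm _ hx _ (hB hy) _ (hC hz)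

theorem rotaBaxterBracket_skew_right {A B C : Set M} {c : S}
    (hRα : Function.Commute R α) (hRβ : Function.Commute R β)
    (hA : Set.MapsTo R A A) (hB : Set.MapsTo R B B) (hC : Set.MapsTo R C C)
    (hm : ∀ x ∈ A, ∀ y ∈ B, ∀ z ∈ C, m (β x) (β y) (α z) = -(c • m (β x) (β z) (α y)))
    {x y z : M} (hx : x ∈ A) (hy : y ∈ B) (hz : z ∈ C) :
    rotaBaxterBracket m R (β x) (β y) (α z) =
      -(c • rotaBaxterBracket m R (β x) (β z) (α y)) := by
  simp only [rotaBaxterBracket_apply, hRα.eq, hRβ.eq]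
  linear_combination (norm := module)
    hm _ (hA hx) _ (hB hy) _ hz + hm _ (hA hx) _ hy _ (hC hz) + hm _ hx _ (hB hy) _ (hC hz)

/-- The difference of the two sides of the 3-BiHom-Jacobi identity. The scalars `p`, `q`, `r` stand
for the three products of values of `ε`, which depend only on the degrees of the arguments. -/
def biHomJacobiator (m : M →ₗ[S] M →ₗ[S] M →ₗ[S] M) (α β : M → M) (p q r : S)
    (x y z u v : M) : M :=
  m (β (β x)) (β (β y)) (m (β z) (β u) (α v)) -
    (p • m (β (β u)) (β (β v)) (m (β x) (β y) (α z))
      - q • m (β (β z)) (β (β v)) (m (β x) (β y) (α u))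
      + r • m (β (β z)) (β (β u)) (m (β x) (β y) (α v)))

theorem biHomJacobiator_rotaBaxterBracket (hRα : Function.Commute R α)
    (hRβ : Function.Commute R β) (p q r : S) {x y z u v : M}
    (hzuv : m (R (β z)) (R (β u)) (R (α v)) = R (rotaBaxterBracket m R (β z) (β u) (α v)))
    (hxyz : m (R (β x)) (R (β y)) (R (α z)) = R (rotaBaxterBracket m R (β x) (β y) (α z)))
    (hxyu : m (R (β x)) (R (β y)) (R (α u)) = R (rotaBaxterBracket m R (β x) (β y) (α u)))
    (hxyv : m (R (β x)) (R (β y)) (R (α v)) = R (rotaBaxterBracket m R (β x) (β y) (α v))) :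
    biHomJacobiator (rotaBaxterBracket m R) α β p q r x y z u v =
      biHomJacobiator m α β p q r x (R y) (R z) (R u) (R v)
        + biHomJacobiator m α β p q r (R x) y (R z) (R u) (R v)
        + biHomJacobiator m α β p q r (R x) (R y) z (R u) (R v)
        + biHomJacobiator m α β p q r (R x) (R y) (R z) u (R v)
        + biHomJacobiator m α β p q r (R x) (R y) (R z) (R u) v := by
  simp only [biHomJacobiator, rotaBaxterBracket_rotaBaxterBracket hRα hRβ hzuv,
    rotaBaxterBracket_rotaBaxterBracket hRα hRβ hxyz,
    rotaBaxterBracket_rotaBaxterBracket hRα hRβ hxyu,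
    rotaBaxterBracket_rotaBaxterBracket hRα hRβ hxyv]
  module

end Defects

theorem rotaBaxter_induced_3BiHomLie_general
    {𝒜 : Γ → Submodule K g} {χ : Bicharacter K Γ}
    {m : g →ₗ[K] g →ₗ[K] g →ₗ[K] g} {α β R : g →ₗ[K] g}
    (hLie : Is3BiHomLieColor 𝒜 χ m α β)
    (hR : ∀ a, Set.MapsTo R (𝒜 a) (𝒜 a))
    (hRα : Function.Commute R α) (hRβ : Function.Commute R β)
    (hRB : ∀ a b c, ∀ x ∈ 𝒜 a, ∀ y ∈ 𝒜 b, ∀ z ∈ 𝒜 c,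
      m (R (β x)) (R (β y)) (R (α z)) = R (rotaBaxterBracket m R (β x) (β y) (α z))) :
    Is3BiHomLieColor 𝒜 χ (rotaBaxterBracket m R) α β where
  bracket_even a b c _ hx _ hy _ hz :=
    rotaBaxterBracket_mem (hR a) (hR b) (hR c) (hLie.bracket_even a b c) hx hy hz
  alpha_even := hLie.alpha_even
  beta_even := hLie.beta_even
  skew1 a b c _ hx _ hy _ hz :=
    rotaBaxterBracket_skew_left hRα hRβ (hR a) (hR b) (hR c) (hLie.skew1 a b c) hx hy hz
  skew2 a b c _ hx _ hy _ hz :=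
    rotaBaxterBracket_skew_right hRα hRβ (hR a) (hR b) (hR c) (hLie.skew2 a b c) hx hy hz
  jacobi a b c d e x hx y hy z hz u hu v hv := by
    have jacobiator_eq_zero {x y z u v : g} (hx : x ∈ 𝒜 a) (hy : y ∈ 𝒜 b) (hz : z ∈ 𝒜 c)
        (hu : u ∈ 𝒜 d) (hv : v ∈ 𝒜 e) :
        biHomJacobiator m α β (χ.ε (a + b + c) (d + e)) (χ.ε (a + b) (c + e) * χ.ε d e)
          (χ.ε (a + b) (c + d)) x y z u v = 0 :=
      sub_eq_zero.mpr (hLie.jacobi a b c d e x hx y hy z hz u hu v hv)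
    refine sub_eq_zero.mp ((biHomJacobiator_rotaBaxterBracket hRα hRβ _ _ _
      (hRB c d e z hz u hu v hv) (hRB a b c x hx y hy z hz)
      (hRB a b d x hx y hy u hu) (hRB a b e x hx y hy v hv)).trans ?_)
    rw [jacobiator_eq_zero hx (hR b hy) (hR c hz) (hR d hu) (hR e hv),
      jacobiator_eq_zero (hR a hx) hy (hR c hz) (hR d hu) (hR e hv),
      jacobiator_eq_zero (hR a hx) (hR b hy) hz (hR d hu) (hR e hv),
      jacobiator_eq_zero (hR a hx) (hR b hy) (hR c hz) hu (hR e hv),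
      jacobiator_eq_zero (hR a hx) (hR b hy) (hR c hz) (hR d hu) hv]
    simp only [add_zero]

/-- a Rota-Baxter operator of weight zero on a 3-BiHom-Lie color
algebra induces a new 3-BiHom-Lie color algebra structure. -/
theorem rotaBaxter_induced_3BiHomLie
    (𝒜 : Γ → Submodule K g) (χ : Bicharacter K Γ)
    (m : g →ₗ[K] g →ₗ[K] g →ₗ[K] g) (α β : g →ₗ[K] g)
    (hLie : Is3BiHomLieColor 𝒜 χ m α β)
    (R : g →ₗ[K] g)
    (hRe : ∀ a, ∀ x ∈ 𝒜 a, R x ∈ 𝒜 a)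
    (hRα : ∀ x, R (α x) = α (R x)) (hRβ : ∀ x, R (β x) = β (R x))
    (hRB : ∀ a b c, ∀ x ∈ 𝒜 a, ∀ y ∈ 𝒜 b, ∀ z ∈ 𝒜 c,
      m (R x) (R y) (R z)
        = R (m (R x) (R y) z + m (R x) y (R z) + m x (R y) (R z)))
    (mR : g →ₗ[K] g →ₗ[K] g →ₗ[K] g)
    (hmR : ∀ x y z, mR x y z = m (R x) (R y) z + m (R x) y (R z) + m x (R y) (R z)) :
    Is3BiHomLieColor 𝒜 χ mR α β := by
  obtain rfl : mR = rotaBaxterBracket m R := by ext x y z; exact hmR x y z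
  exact rotaBaxter_induced_3BiHomLie_general hLie hRe hRα hRβ fun a b c x hx y hy z hz =>
    hRB a b c _ (hLie.beta_even a x hx) _ (hLie.beta_even b y hy) _ (hLie.alpha_even c z hz)
end

section
/- Let (g, {·,·,·}, ε) be a 3-pre-Lie color algebra and let α, β be two commuting even algebra automorphisms of g (bijective, preserving {·,·,·}). Then (g, {·,·,·}_{α,β}, ε, α, β) is a 3-BiHom-pre-Lie color algebra, where {x,y,z}_{α,β} = {α(x), α(y), β(z)} for all homogeneous x,y,z ∈ g. -/
variable {K : Type*} [Field K] {Γ : Type*} [AddCommGroup Γ]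
variable {g : Type*} [AddCommGroup g] [Module K g]
variable {V : Type*} [AddCommGroup V] [Module K V]

/-!
Write `α₀, β₀` for the structure maps of the algebra that is twisted and `m' = m ∘ (α, α, β)` for
the twisted bracket, whose structure maps are `α α₀` and `β β₀`. The factors `α` and `β` of `m'`
cancel the additional twists inside its commutator, so that the commutator of `m'` at `(x, y, z)` is
the commutator of `m` at `(α x, α y, β z)`. Hence each identity for `m'` at `(x₁, x₂, x₃, x₄, x₅)`
is the same identity for `m` at `(αβ x₁, αβ x₂, β² x₃, α²β x₄, α²β x₅)`. A 3-pre-Lie color algebra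
is the case `α₀ = β₀ = id`.
-/

theorem mul_twisted_div_of_commute {G : Type*} [Group G] {a b a₀ b₀ : G} (hab : Commute a b)
    (haa₀ : Commute a a₀) (hab₀ : Commute a b₀) (hba₀ : Commute b a₀) (hbb₀ : Commute b b₀) :
    a * (b * b₀ * (a * a₀)⁻¹) = b₀ * a₀⁻¹ * b :=
  calc a * (b * b₀ * (a * a₀)⁻¹) = a * (b * (b₀ * a₀⁻¹)) * a⁻¹ := by group
    _ = b * (b₀ * a₀⁻¹) := (hab.mul_right (hab₀.mul_right haa₀.inv_right)).mul_inv_cancel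
    _ = b₀ * a₀⁻¹ * b := hbb₀.mul_right hba₀.inv_right

/-- The Yau twist `(x, y, z) ↦ m (α x) (α y) (β z)` of a ternary product `m`, by which the structure
maps of a ternary BiHom-algebra are changed. -/
def yauTwist (m : g →ₗ[K] g →ₗ[K] g →ₗ[K] g) (α β : g →ₗ[K] g) : g →ₗ[K] g →ₗ[K] g →ₗ[K] g :=
  (m.compl₁₂ α α).compr₂ (LinearMap.lcomp K g β)

theorem yauTwist_apply (m : g →ₗ[K] g →ₗ[K] g →ₗ[K] g) (α β : g →ₗ[K] g) (x y z : g) :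
    yauTwist m α β x y z = m (α x) (α y) (β z) :=
  rfl

/-- An automorphism `φ` of a ternary BiHom-algebra `(g, m, α₀, β₀)`; as for all morphisms of
BiHom-algebras, `φ` is required to commute with the structure maps. Multiplicativity is asked of all
elements, not only of homogeneous ones: evenness of `α₀` and `β₀` does not make `α₀⁻¹` and `β₀⁻¹`
even, so the arguments of the products in `preC` may fail to be homogeneous. -/
structure IsBiHomAut (m : g →ₗ[K] g →ₗ[K] g →ₗ[K] g) (α₀ β₀ φ : g ≃ₗ[K] g) : Prop where
  map_bracket : ∀ x y z, φ (m x y z) = m (φ x) (φ y) (φ z)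
  commute_alpha : Commute φ α₀
  commute_beta : Commute φ β₀

namespace IsBiHomAut

variable {m : g →ₗ[K] g →ₗ[K] g →ₗ[K] g} {α₀ β₀ α β φ : g ≃ₗ[K] g}

theorem apply_alpha (hφ : IsBiHomAut m α₀ β₀ φ) (x : g) : φ (α₀ x) = α₀ (φ x) :=
  LinearEquiv.congr_fun hφ.commute_alpha x

theorem apply_beta (hφ : IsBiHomAut m α₀ β₀ φ) (x : g) : φ (β₀ x) = β₀ (φ x) :=
  LinearEquiv.congr_fun hφ.commute_beta x

theorem map_preC (hφ : IsBiHomAut m α₀ β₀ φ) (χ : Bicharacter K Γ) (a b c : Γ) (x y z : g) :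
    φ (preC χ m α₀ β₀ a b c x y z) = preC χ m α₀ β₀ a b c (φ x) (φ y) (φ z) := by
  have apply_alpha_symm (w : g) : φ (α₀.symm w) = α₀.symm (φ w) :=
    LinearEquiv.congr_fun hφ.commute_alpha.inv_right w
  have apply_beta_symm (w : g) : φ (β₀.symm w) = β₀.symm (φ w) :=
    LinearEquiv.congr_fun hφ.commute_beta.inv_right w
  simp only [preC, map_add, map_sub, map_smul, hφ.map_bracket, hφ.apply_alpha, hφ.apply_beta,
    apply_alpha_symm, apply_beta_symm]

theorem preC_yauTwist (hα : IsBiHomAut m α₀ β₀ α) (hβ : IsBiHomAut m α₀ β₀ β)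
    (hαβ : Commute α β) (χ : Bicharacter K Γ) (a b c : Γ) (x y z : g) :
    preC χ (yauTwist m α β) (α * α₀) (β * β₀) a b c x y z
      = preC χ m α₀ β₀ a b c (α x) (α y) (β z) := by
  have second_slot (w : g) : α ((β * β₀) ((α * α₀).symm w)) = β₀ (α₀.symm (β w)) :=
    LinearEquiv.congr_fun (mul_twisted_div_of_commute hαβ hα.commute_alpha hα.commute_beta
      hβ.commute_alpha hβ.commute_beta) w
  have third_slot (w : g) : β ((α * α₀) ((β * β₀).symm w)) = α₀ (β₀.symm (α w)) :=
    LinearEquiv.congr_fun (mul_twisted_div_of_commute hαβ.symm hβ.commute_beta hβ.commute_alpha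
      hα.commute_beta hα.commute_alpha) w
  simp only [preC, yauTwist_apply, LinearEquiv.coe_coe, second_slot, third_slot]

theorem map_preC_yauTwist (hα : IsBiHomAut m α₀ β₀ α) (hβ : IsBiHomAut m α₀ β₀ β)
    (hαβ : Commute α β) (χ : Bicharacter K Γ) (a b c : Γ) (x y z : g) :
    α (preC χ (yauTwist m α β) (α * α₀) (β * β₀) a b c x y z)
      = preC χ m α₀ β₀ a b c (α (α x)) (α (α y)) (α (β z)) := by
  rw [hα.preC_yauTwist hβ hαβ, hα.map_preC]

end IsBiHomAut

namespace Is3BiHomPreLieColor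

variable {𝒜 : Γ → Submodule K g} {χ : Bicharacter K Γ} {m : g →ₗ[K] g →ₗ[K] g →ₗ[K] g}
  {α₀ β₀ α β : g ≃ₗ[K] g}

theorem yauTwist_identity3 (h : Is3BiHomPreLieColor 𝒜 χ m α₀ β₀)
    (hα : IsBiHomAut m α₀ β₀ α) (hβ : IsBiHomAut m α₀ β₀ β) (hαβ : Commute α β)
    (hαe : ∀ a, ∀ x ∈ 𝒜 a, α x ∈ 𝒜 a) (hβe : ∀ a, ∀ x ∈ 𝒜 a, β x ∈ 𝒜 a)
    {a₁ a₂ a₃ a₄ a₅ : Γ} {x₁ x₂ x₃ x₄ x₅ : g} (hx₁ : x₁ ∈ 𝒜 a₁) (hx₂ : x₂ ∈ 𝒜 a₂)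
    (hx₃ : x₃ ∈ 𝒜 a₃) (hx₄ : x₄ ∈ 𝒜 a₄) (hx₅ : x₅ ∈ 𝒜 a₅) :
    let m' := yauTwist m α β
    let α' := α * α₀
    let β' := β * β₀
    m' (α' (β' x₄)) (α' (β' x₅)) (m' x₁ x₂ x₃)
      = m' (preC χ m' α' β' a₄ a₅ a₁ (β' x₄) (β' x₅) x₁) (β' x₂) (β' x₃)
        + χ.ε a₁ (a₄ + a₅) • m' (β' x₁) (preC χ m' α' β' a₄ a₅ a₂ (β' x₄) (β' x₅) x₂) (β' x₃)
        + χ.ε (a₁ + a₂) (a₄ + a₅) • m' (β' x₁) (β' x₂) (m' (α' x₄) (α' x₅) x₃) := by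
  have apply_comm (x : g) : α (β x) = β (α x) := LinearEquiv.congr_fun hαβ x
  have mem_αβ {a : Γ} {x : g} (hx : x ∈ 𝒜 a) : β (α x) ∈ 𝒜 a := hβe a _ (hαe a x hx)
  simpa only [yauTwist_apply, LinearEquiv.coe_coe, LinearEquiv.mul_apply, hα.apply_alpha,
    hα.apply_beta, hβ.apply_alpha, hβ.apply_beta, apply_comm, hβ.map_bracket,
    hα.map_preC_yauTwist hβ hαβ] using
    h.identity3 a₁ a₂ a₃ a₄ a₅ _ (mem_αβ hx₁) _ (mem_αβ hx₂) _ (hβe _ _ (hβe _ _ hx₃))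
      _ (mem_αβ (hαe _ _ hx₄)) _ (mem_αβ (hαe _ _ hx₅))

theorem yauTwist_identity4 (h : Is3BiHomPreLieColor 𝒜 χ m α₀ β₀)
    (hα : IsBiHomAut m α₀ β₀ α) (hβ : IsBiHomAut m α₀ β₀ β) (hαβ : Commute α β)
    (hαe : ∀ a, ∀ x ∈ 𝒜 a, α x ∈ 𝒜 a) (hβe : ∀ a, ∀ x ∈ 𝒜 a, β x ∈ 𝒜 a)
    {a₁ a₂ a₃ a₄ a₅ : Γ} {x₁ x₂ x₃ x₄ x₅ : g} (hx₁ : x₁ ∈ 𝒜 a₁) (hx₂ : x₂ ∈ 𝒜 a₂)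
    (hx₃ : x₃ ∈ 𝒜 a₃) (hx₄ : x₄ ∈ 𝒜 a₄) (hx₅ : x₅ ∈ 𝒜 a₅) :
    let m' := yauTwist m α β
    let α' := α * α₀
    let β' := β * β₀
    m' (preC χ m' α' β' a₄ a₅ a₁ (β' x₄) (β' x₅) x₁) (β' x₂) (β' x₃)
      = χ.ε a₄ (a₁ + a₅) • m' (α' (β' x₅)) (β' x₁) (m' (α' x₄) x₂ x₃)
        + χ.ε a₁ (a₄ + a₅) • m' (β' x₁) (α' (β' x₄)) (m' (α' x₅) x₂ x₃)
        + m' (α' (β' x₄)) (α' (β' x₅)) (m' x₁ x₂ x₃) := by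
  have apply_comm (x : g) : α (β x) = β (α x) := LinearEquiv.congr_fun hαβ x
  have mem_αβ {a : Γ} {x : g} (hx : x ∈ 𝒜 a) : β (α x) ∈ 𝒜 a := hβe a _ (hαe a x hx)
  simpa only [yauTwist_apply, LinearEquiv.coe_coe, LinearEquiv.mul_apply, hα.apply_alpha,
    hα.apply_beta, hβ.apply_alpha, hβ.apply_beta, apply_comm, hβ.map_bracket,
    hα.map_preC_yauTwist hβ hαβ] using
    h.identity4 a₁ a₂ a₃ a₄ a₅ _ (mem_αβ hx₁) _ (mem_αβ hx₂) _ (hβe _ _ (hβe _ _ hx₃))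
      _ (mem_αβ (hαe _ _ hx₄)) _ (mem_αβ (hαe _ _ hx₅))

end Is3BiHomPreLieColor

theorem twist_3preLie_color_general {𝒜 : Γ → Submodule K g} {χ : Bicharacter K Γ}
    {m : g →ₗ[K] g →ₗ[K] g →ₗ[K] g} {α₀ β₀ α β : g ≃ₗ[K] g}
    (h : Is3BiHomPreLieColor 𝒜 χ m α₀ β₀)
    (hα : IsBiHomAut m α₀ β₀ α) (hβ : IsBiHomAut m α₀ β₀ β) (hαβ : Commute α β)
    (hαe : ∀ a, ∀ x ∈ 𝒜 a, α x ∈ 𝒜 a) (hβe : ∀ a, ∀ x ∈ 𝒜 a, β x ∈ 𝒜 a) :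
    Is3BiHomPreLieColor 𝒜 χ (yauTwist m α β) (α * α₀) (β * β₀) := by
  have apply_comm (x : g) : α (β x) = β (α x) := LinearEquiv.congr_fun hαβ x
  have mem_αβ {a : Γ} {x : g} (hx : x ∈ 𝒜 a) : β (α x) ∈ 𝒜 a := hβe a _ (hαe a x hx)
  constructor
  case bracket_even =>
    exact fun a b c x hx y hy z hz ↦
      h.bracket_even a b c _ (hαe a x hx) _ (hαe b y hy) _ (hβe c z hz)
  case alpha_even => exact fun a x hx ↦ hαe a _ (h.alpha_even a x hx)
  case beta_even => exact fun a x hx ↦ hβe a _ (h.beta_even a x hx)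
  case comm =>
    simp only [LinearEquiv.mul_apply, hα.apply_alpha, hα.apply_beta, hβ.apply_alpha, hβ.apply_beta,
      h.comm, apply_comm, implies_true]
  case mult_alpha =>
    intro a b c x hx y hy z hz
    simp only [yauTwist_apply, LinearEquiv.coe_coe, LinearEquiv.mul_apply, hα.apply_alpha,
      hβ.apply_alpha, apply_comm, hα.map_bracket,
      h.mult_alpha a b c _ (hαe a _ (hαe a x hx)) _ (hαe b _ (hαe b y hy)) _ (mem_αβ hz)]
  case mult_beta =>
    intro a b c x hx y hy z hz
    simp only [yauTwist_apply, LinearEquiv.coe_coe, LinearEquiv.mul_apply, hα.apply_beta,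
      hβ.apply_beta, apply_comm, hβ.map_bracket,
      h.mult_beta a b c _ (mem_αβ hx) _ (mem_αβ hy) _ (hβe c _ (hβe c z hz))]
  case skew =>
    intro a b c x hx y hy z hz
    simpa only [yauTwist_apply, LinearEquiv.coe_coe, LinearEquiv.mul_apply, hα.apply_alpha,
      hα.apply_beta, hβ.apply_alpha, hβ.apply_beta, apply_comm] using
      h.skew a b c _ (mem_αβ hx) _ (mem_αβ hy) _ (mem_αβ hz)
  case identity3 =>
    exact fun _ _ _ _ _ _ hx₁ _ hx₂ _ hx₃ _ hx₄ _ hx₅ ↦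
      h.yauTwist_identity3 hα hβ hαβ hαe hβe hx₁ hx₂ hx₃ hx₄ hx₅
  case identity4 =>
    exact fun _ _ _ _ _ _ hx₁ _ hx₂ _ hx₃ _ hx₄ _ hx₅ ↦
      h.yauTwist_identity4 hα hβ hαβ hαe hβe hx₁ hx₂ hx₃ hx₄ hx₅

/-- twisting a 3-pre-Lie color algebra by two commuting even
algebra automorphisms yields a 3-BiHom-pre-Lie color algebra. -/
theorem twist_3preLie_color
    (𝒜 : Γ → Submodule K g) (χ : Bicharacter K Γ)
    (m : g →ₗ[K] g →ₗ[K] g →ₗ[K] g)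
    (h : Is3BiHomPreLieColor 𝒜 χ m (LinearEquiv.refl K g) (LinearEquiv.refl K g))
    (α β : g ≃ₗ[K] g)
    (hαe : ∀ a, ∀ x ∈ 𝒜 a, α x ∈ 𝒜 a) (hβe : ∀ a, ∀ x ∈ 𝒜 a, β x ∈ 𝒜 a)
    (hcomm : ∀ x, α (β x) = β (α x))
    (hαm : ∀ x y z, α (m x y z) = m (α x) (α y) (α z))
    (hβm : ∀ x y z, β (m x y z) = m (β x) (β y) (β z))
    (m' : g →ₗ[K] g →ₗ[K] g →ₗ[K] g)
    (hm' : ∀ x y z, m' x y z = m (α x) (α y) (β z)) :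
    Is3BiHomPreLieColor 𝒜 χ m' α β := by
  obtain rfl : m' = yauTwist m α β := LinearMap.ext fun x ↦ LinearMap.ext₂ (hm' x)
  exact twist_3preLie_color_general h ⟨hαm, .one_right α, .one_right α⟩
    ⟨hβm, .one_right β, .one_right β⟩ (LinearEquiv.ext hcomm) hαe hβe
end
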